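/- arXiv:1905.07551 — 3 statements merged into one kernel-verified Lean document; each statement's English description precedes it below -/
import Mathlib

section
/- Let (]a_i,b_i[)_{i∈I} be a family of nonempty, pairwise disjoint open subintervals of [0,1], (N_i)_{i∈I} a family of functions from [0,1] to [0,1], and N_I the function obtained by the ordinal-sum formula from these data. Then every N_i (i ∈ I) is a continuous fuzzy negation if and only if N_I is a continuous fuzzy negation such that N_I(a_i) = 1−a_i and N_I(b_i) = 1−b_i for each i ∈ I. -/
/-!
On each `[a i, b i]` the ordinal sum `NI` is an affine rescaling of `N i`, so everything about the
summands can be read off from `NI` once its endpoint values are known.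

Conversely, if all `N i` are continuous fuzzy negations, then `NI` maps `[a i, b i]` antitonically
onto `[1 - b i, 1 - a i]`. Distinct intervals lie to one side of each other, and the diagonal
`x ↦ 1 - x` separates their images, so `NI` is antitone (`ordinalSum_antitone`). By the
intermediate value theorem on each block, `NI` attains every value of `[0,1]`
(`ordinalSum_surj`). A monotone surjection between intervals is continuous
(`continuousOn_of_antitone_surj`); this avoids any discussion of accumulation points of the
family of intervals.
-/

open Set

/-- A fuzzy negation: a function `N : [0,1] → [0,1]` (here modeled on `ℝ`)
with `N 0 = 1`, `N 1 = 0` and `N` decreasing on `[0,1]`. -/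
def FuzzyNegation (N : ℝ → ℝ) : Prop :=
  (∀ x ∈ Icc (0:ℝ) 1, N x ∈ Icc (0:ℝ) 1) ∧
  N 0 = 1 ∧ N 1 = 0 ∧
  (∀ x ∈ Icc (0:ℝ) 1, ∀ y ∈ Icc (0:ℝ) 1, x ≤ y → N y ≤ N x)

/-- `(]a i, b i[)_{i ∈ I}` is a family of nonempty, pairwise disjoint open
subintervals of `[0,1]`. -/
def GoodFamily {I : Type*} (a b : I → ℝ) : Prop :=
  (∀ i, 0 ≤ a i ∧ a i < b i ∧ b i ≤ 1) ∧
  (∀ i j, i ≠ j → Disjoint (Ioo (a i) (b i)) (Ioo (a j) (b j)))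

/-- `NI` is the ordinal sum of the summands `(a i, b i, N i)_{i ∈ I}`:
`NI x = (1 - b i) + (b i - a i) * N i ((x - a i)/(b i - a i))` whenever
`x ∈ [a i, b i]`, and `NI x = 1 - x` otherwise. -/
def IsOrdinalSum {I : Type*} (a b : I → ℝ) (N : I → ℝ → ℝ) (NI : ℝ → ℝ) : Prop :=
  ∀ x ∈ Icc (0:ℝ) 1,
    (∀ i, x ∈ Icc (a i) (b i) →
      NI x = (1 - b i) + (b i - a i) * N i ((x - a i) / (b i - a i))) ∧
    ((∀ i, x ∉ Icc (a i) (b i)) → NI x = 1 - x)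

lemma continuousOn_of_antitone_surj (f : ℝ → ℝ)
    (hmap : ∀ x ∈ Icc (0:ℝ) 1, f x ∈ Icc (0:ℝ) 1)
    (hanti : ∀ x ∈ Icc (0:ℝ) 1, ∀ y ∈ Icc (0:ℝ) 1, x ≤ y → f y ≤ f x)
    (hsurj : ∀ v ∈ Icc (0:ℝ) 1, ∃ x ∈ Icc (0:ℝ) 1, f x = v) :
    ContinuousOn f (Icc (0:ℝ) 1) := by
  let g : Icc (0:ℝ) 1 → Icc (0:ℝ) 1 := fun x =>
    ⟨1 - f x, by have h := hmap x x.2; constructor <;> linarith [h.1, h.2]⟩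
  have hmono : Monotone g := by
    intro x y hxy
    have h := hanti x x.2 y y.2 hxy
    change 1 - f x ≤ 1 - f y
    linarith
  have hgs : Function.Surjective g := by
    rintro ⟨v, hv⟩
    obtain ⟨x, hx, hxv⟩ := hsurj (1 - v) ⟨by linarith [hv.2], by linarith [hv.1]⟩
    refine ⟨⟨x, hx⟩, Subtype.ext ?_⟩
    change 1 - f x = v
    linarith
  have hg : Continuous g := hmono.continuous_of_surjective hgs
  rw [continuousOn_iff_continuous_domRestrict]
  have heq : (Icc (0:ℝ) 1).domRestrict f = fun x => 1 - (g x : ℝ) := by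
    funext x
    change f x = 1 - (1 - f x)
    ring
  rw [heq]
  exact continuous_const.sub (continuous_subtype_val.comp hg)

section Blocks

variable {I : Type*} {a b : I → ℝ} {N : I → ℝ → ℝ} {NI : ℝ → ℝ}

lemma rescale_mem {p q x : ℝ} (hpq : p < q) (hx : x ∈ Icc p q) :
    (x - p) / (q - p) ∈ Icc (0:ℝ) 1 := by
  have h : 0 < q - p := sub_pos.2 hpq
  refine ⟨div_nonneg (by linarith [hx.1]) h.le, ?_⟩
  rw [div_le_one h]
  linarith [hx.2]

lemma GoodFamily.mem_unit (hfam : GoodFamily a b) {i : I} {x : ℝ}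
    (hx : x ∈ Icc (a i) (b i)) : x ∈ Icc (0:ℝ) 1 :=
  ⟨(hfam.1 i).1.trans hx.1, hx.2.trans (hfam.1 i).2.2⟩

/-- Two distinct intervals of the family lie to one side of each other. -/
lemma GoodFamily.separated (hfam : GoodFamily a b) {i j : I} (hij : i ≠ j) :
    b i ≤ a j ∨ b j ≤ a i := by
  by_contra! hcon
  obtain ⟨h1, h2⟩ := hcon
  have hi := (hfam.1 i).2.1
  have hj := (hfam.1 j).2.1
  obtain ⟨c, hc1, hc2⟩ := exists_between
    (show max (a i) (a j) < min (b i) (b j) from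
      max_lt (lt_min hi h2) (lt_min h1 hj))
  rw [max_lt_iff] at hc1
  rw [lt_min_iff] at hc2
  exact Set.disjoint_left.1 (hfam.2 i j hij) ⟨hc1.1, hc2.1⟩ ⟨hc1.2, hc2.2⟩

lemma ordinalSum_block_mem (hfam : GoodFamily a b)
    (hmaps : ∀ i, ∀ x ∈ Icc (0:ℝ) 1, N i x ∈ Icc (0:ℝ) 1)
    (hNI : IsOrdinalSum a b N NI) {i : I} {x : ℝ} (hx : x ∈ Icc (a i) (b i)) :
    NI x ∈ Icc (1 - b i) (1 - a i) := by
  have hab := (hfam.1 i).2.1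
  have hm := hmaps i _ (rescale_mem hab hx)
  rw [(hNI x (hfam.mem_unit hx)).1 i hx]
  constructor <;> nlinarith [hm.1, hm.2]

lemma ordinalSum_left (hfam : GoodFamily a b) (hNI : IsOrdinalSum a b N NI) (i : I) :
    NI (a i) = (1 - b i) + (b i - a i) * N i 0 := by
  have hab := (hfam.1 i).2.1
  have hx : a i ∈ Icc (a i) (b i) := ⟨le_rfl, hab.le⟩
  rw [(hNI _ (hfam.mem_unit hx)).1 i hx, sub_self, zero_div]

lemma ordinalSum_right (hfam : GoodFamily a b) (hNI : IsOrdinalSum a b N NI) (i : I) :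
    NI (b i) = (1 - b i) + (b i - a i) * N i 1 := by
  have hab := (hfam.1 i).2.1
  have hx : b i ∈ Icc (a i) (b i) := ⟨hab.le, le_rfl⟩
  rw [(hNI _ (hfam.mem_unit hx)).1 i hx, div_self (sub_pos.2 hab).ne']

lemma ordinalSum_maps (hfam : GoodFamily a b)
    (hmaps : ∀ i, ∀ x ∈ Icc (0:ℝ) 1, N i x ∈ Icc (0:ℝ) 1)
    (hNI : IsOrdinalSum a b N NI) {x : ℝ} (hx : x ∈ Icc (0:ℝ) 1) :
    NI x ∈ Icc (0:ℝ) 1 := by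
  by_cases h : ∃ i, x ∈ Icc (a i) (b i)
  · obtain ⟨i, hi⟩ := h
    have hm := ordinalSum_block_mem hfam hmaps hNI hi
    obtain ⟨h0, _, h1⟩ := hfam.1 i
    exact ⟨by linarith [hm.1], by linarith [hm.2]⟩
  · rw [(hNI x hx).2 (not_exists.1 h)]
    exact ⟨by linarith [hx.2], by linarith [hx.1]⟩

lemma ordinalSum_antitone (hfam : GoodFamily a b)
    (hN : ∀ i, FuzzyNegation (N i))
    (hNI : IsOrdinalSum a b N NI) {x y : ℝ} (hx : x ∈ Icc (0:ℝ) 1) (hy : y ∈ Icc (0:ℝ) 1)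
    (hxy : x ≤ y) : NI y ≤ NI x := by
  have hmaps : ∀ i, ∀ x ∈ Icc (0:ℝ) 1, N i x ∈ Icc (0:ℝ) 1 := fun i => (hN i).1
  by_cases h : ∃ i, x ∈ Icc (a i) (b i)
  · obtain ⟨i, hi⟩ := h
    have hab := (hfam.1 i).2.1
    by_cases hyi : y ≤ b i
    · have hi' : y ∈ Icc (a i) (b i) := ⟨hi.1.trans hxy, hyi⟩
      have hpos : 0 < b i - a i := sub_pos.2 hab
      have hle := (hN i).2.2.2 _ (rescale_mem hab hi) _ (rescale_mem hab hi')
        (div_le_div_of_nonneg_right (by linarith) hpos.le)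
      rw [(hNI x hx).1 i hi, (hNI y hy).1 i hi']
      nlinarith
    · push Not at hyi
      -- Here `y` lies to the right of the block of `x`, and `1 - b i` separates the two values.
      have hmx := ordinalSum_block_mem hfam hmaps hNI hi
      by_cases hj : ∃ j, y ∈ Icc (a j) (b j)
      · obtain ⟨j, hj⟩ := hj
        have hmy := ordinalSum_block_mem hfam hmaps hNI hj
        have hij : i ≠ j := by
          rintro rfl
          exact absurd hj.2 (not_le.2 hyi)
        rcases hfam.separated hij with hs | hs
        · linarith [hmx.1, hmy.2]
        · linarith [hj.2]
      · rw [(hNI y hy).2 (not_exists.1 hj)]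
        linarith [hmx.1]
  · rw [(hNI x hx).2 (not_exists.1 h)]
    by_cases hj : ∃ j, y ∈ Icc (a j) (b j)
    · obtain ⟨j, hj⟩ := hj
      have hmy := ordinalSum_block_mem hfam hmaps hNI hj
      have hxa : x < a j := by
        by_contra! hc
        exact h ⟨j, hc, hxy.trans hj.2⟩
      linarith [hmy.2]
    · rw [(hNI y hy).2 (not_exists.1 hj)]
      linarith

lemma ordinalSum_surj (hfam : GoodFamily a b)
    (hN : ∀ i, FuzzyNegation (N i) ∧ ContinuousOn (N i) (Icc (0:ℝ) 1))
    (hNI : IsOrdinalSum a b N NI) {v : ℝ} (hv : v ∈ Icc (0:ℝ) 1) :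
    ∃ x ∈ Icc (0:ℝ) 1, NI x = v := by
  have hc : 1 - v ∈ Icc (0:ℝ) 1 := ⟨by linarith [hv.2], by linarith [hv.1]⟩
  by_cases h : ∃ i, 1 - v ∈ Icc (a i) (b i)
  · obtain ⟨i, hi⟩ := h
    have hab := (hfam.1 i).2.1
    have hcont : ContinuousOn NI (Icc (a i) (b i)) := by
      have h1 : ContinuousOn
          (fun x => (1 - b i) + (b i - a i) * N i ((x - a i) / (b i - a i)))
          (Icc (a i) (b i)) := by
        refine continuousOn_const.add (continuousOn_const.mul ?_)
        exact (hN i).2.comp (by fun_prop) (fun x hx => rescale_mem hab hx)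
      exact h1.congr fun x hx => (hNI x (hfam.mem_unit hx)).1 i hx
    have hivt := intermediate_value_Icc' hab.le hcont
    rw [ordinalSum_left hfam hNI, ordinalSum_right hfam hNI, (hN i).1.2.1,
      (hN i).1.2.2.1] at hivt
    obtain ⟨x, hx, hxv⟩ := hivt
      (show v ∈ Icc _ _ from ⟨by linarith [hi.2], by linarith [hi.1]⟩)
    exact ⟨x, hfam.mem_unit hx, hxv⟩
  · exact ⟨1 - v, hc, by rw [(hNI _ hc).2 (not_exists.1 h)]; ring⟩

/-- An antitone map of `[0,1]` onto itself sends the least element to the greatest and vice versa;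
this yields the boundary values of `NI`, whether or not `0` and `1` belong to a block. -/
lemma ordinalSum_fuzzyNegation (hfam : GoodFamily a b)
    (hN : ∀ i, FuzzyNegation (N i) ∧ ContinuousOn (N i) (Icc (0:ℝ) 1))
    (hNI : IsOrdinalSum a b N NI) : FuzzyNegation NI := by
  have hm : ∀ x ∈ Icc (0:ℝ) 1, NI x ∈ Icc (0:ℝ) 1 :=
    fun x hx => ordinalSum_maps hfam (fun i => (hN i).1.1) hNI hx
  have hanti : ∀ x ∈ Icc (0:ℝ) 1, ∀ y ∈ Icc (0:ℝ) 1, x ≤ y → NI y ≤ NI x :=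
    fun x hx y hy => ordinalSum_antitone hfam (fun i => (hN i).1) hNI hx hy
  have z : (0:ℝ) ∈ Icc (0:ℝ) 1 := ⟨le_rfl, zero_le_one⟩
  have o : (1:ℝ) ∈ Icc (0:ℝ) 1 := ⟨zero_le_one, le_rfl⟩
  refine ⟨hm, le_antisymm (hm 0 z).2 ?_, le_antisymm ?_ (hm 1 o).1, hanti⟩
  · obtain ⟨x, hx, hx1⟩ := ordinalSum_surj hfam hN hNI o
    exact hx1 ▸ hanti 0 z x hx hx.1
  · obtain ⟨x, hx, hx0⟩ := ordinalSum_surj hfam hN hNI z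
    exact hx0 ▸ hanti x hx 1 o hx.2

/-- A summand recovered from its block of the ordinal sum. -/
lemma ordinalSum_summand (hfam : GoodFamily a b) (hNI : IsOrdinalSum a b N NI) (i : I)
    {t : ℝ} (ht : t ∈ Icc (0:ℝ) 1) :
    a i + (b i - a i) * t ∈ Icc (0:ℝ) 1 ∧
      N i t = (NI (a i + (b i - a i) * t) - (1 - b i)) / (b i - a i) := by
  have hab := (hfam.1 i).2.1
  have hpos : 0 < b i - a i := sub_pos.2 hab
  have hx : a i + (b i - a i) * t ∈ Icc (a i) (b i) :=
    ⟨by nlinarith [ht.1], by nlinarith [ht.2]⟩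
  refine ⟨hfam.mem_unit hx, ?_⟩
  rw [(hNI _ (hfam.mem_unit hx)).1 i hx]
  have h : (a i + (b i - a i) * t - a i) / (b i - a i) = t := by
    rw [add_sub_cancel_left, mul_div_cancel_left₀ _ hpos.ne']
  rw [h, add_sub_cancel_left, mul_div_cancel_left₀ _ hpos.ne']

end Blocks

theorem ordinalSum_continuous_fuzzyNegation_iff {I : Type*} (a b : I → ℝ)
    (N : I → ℝ → ℝ) (NI : ℝ → ℝ)
    (hfam : GoodFamily a b)
    (hmaps : ∀ i, ∀ x ∈ Icc (0:ℝ) 1, N i x ∈ Icc (0:ℝ) 1)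
    (hNI : IsOrdinalSum a b N NI) :
    (∀ i, FuzzyNegation (N i) ∧ ContinuousOn (N i) (Icc (0:ℝ) 1)) ↔
      ((FuzzyNegation NI ∧ ContinuousOn NI (Icc (0:ℝ) 1)) ∧
        ∀ i, NI (a i) = 1 - a i ∧ NI (b i) = 1 - b i) := by
  constructor
  · intro hN
    have hF := ordinalSum_fuzzyNegation hfam hN hNI
    refine ⟨⟨hF, continuousOn_of_antitone_surj NI hF.1 hF.2.2.2
      fun v hv => ordinalSum_surj hfam hN hNI hv⟩, fun i => ⟨?_, ?_⟩⟩
    · rw [ordinalSum_left hfam hNI, (hN i).1.2.1]; ring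
    · rw [ordinalSum_right hfam hNI, (hN i).1.2.2.1]; ring
  · rintro ⟨⟨hF, hcont⟩, hend⟩ i
    have hpos : 0 < b i - a i := sub_pos.2 (hfam.1 i).2.1
    refine ⟨⟨hmaps i, ?_, ?_, ?_⟩, ?_⟩
    · have h := ordinalSum_left hfam hNI i
      rw [(hend i).1] at h
      exact mul_left_cancel₀ hpos.ne' (by linarith)
    · have h := ordinalSum_right hfam hNI i
      rw [(hend i).2] at h
      exact mul_left_cancel₀ hpos.ne' (by linarith)
    · intro s hs t ht hst
      obtain ⟨hs', es⟩ := ordinalSum_summand hfam hNI i hs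
      obtain ⟨ht', et⟩ := ordinalSum_summand hfam hNI i ht
      rw [es, et]
      have := hF.2.2.2 _ hs' _ ht' (by nlinarith)
      exact div_le_div_of_nonneg_right (by linarith) hpos.le
    · have h1 : ContinuousOn (fun t => (NI (a i + (b i - a i) * t) - (1 - b i)) / (b i - a i))
          (Icc (0:ℝ) 1) := by
        refine ContinuousOn.div_const (ContinuousOn.sub ?_ continuousOn_const) _
        exact hcont.comp (by fun_prop) (fun t ht => (ordinalSum_summand hfam hNI i ht).1)
      exact h1.congr fun t ht => (ordinalSum_summand hfam hNI i ht).2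
end

section
/- Let (]a_i,b_i[)_{i∈I} be a family of nonempty, pairwise disjoint open subintervals of [0,1], (N_i)_{i∈I} a family of functions from [0,1] to [0,1], and N_I the function obtained by the ordinal-sum formula from these data. Then every N_i (i ∈ I) is a strictly decreasing fuzzy negation if and only if N_I is a strictly decreasing fuzzy negation such that N_I(a_i) = 1−a_i and N_I(b_i) = 1−b_i for each i ∈ I. -/
/-!
Call `x ∈ [0,1]` *free* if it lies in no open interval `]a i, b i[`. When every `N i` is a
strictly decreasing fuzzy negation, the boundary values `N i 0 = 1`, `N i 1 = 0` make `NI x = 1 - x`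
at every free point, while `NI` maps `]a i, b i[` strictly decreasingly into `]1 - b i, 1 - a i[`
(`ordinalSum_dichotomy`). As the open intervals are disjoint, comparing two points
reduces to comparing endpoints, unless both lie in the same interval. Conversely, solving the
formula for `N i` exhibits it as an increasing affine rescaling of `NI` restricted to
`[a i, b i]`, so monotonicity transfers, and the values at `a i` and `b i` give those of `N i` at
`0` and `1`.
-/

open Set

/-- The ordinal-sum formula read in the coordinate `t ∈ [0,1]` of the `i`-th interval. -/
lemma ordinalSum_affine {I : Type*} {a b : I → ℝ} {N : I → ℝ → ℝ} {NI : ℝ → ℝ}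
    (hfam : GoodFamily a b) (hNI : IsOrdinalSum a b N NI) (i : I) {t : ℝ}
    (ht : t ∈ Icc (0:ℝ) 1) :
    a i + (b i - a i) * t ∈ Icc (0:ℝ) 1 ∧
      NI (a i + (b i - a i) * t) = (1 - b i) + (b i - a i) * N i t := by
  obtain ⟨h0, hab, h1⟩ := hfam.1 i
  obtain ⟨ht0, ht1⟩ := ht
  have hlo : a i ≤ a i + (b i - a i) * t := by nlinarith
  have hhi : a i + (b i - a i) * t ≤ b i := by nlinarith
  have hmem : a i + (b i - a i) * t ∈ Icc (0:ℝ) 1 := ⟨by linarith, by linarith⟩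
  refine ⟨hmem, ?_⟩
  rw [(hNI _ hmem).1 i ⟨hlo, hhi⟩, add_sub_cancel_left,
    mul_div_cancel_left₀ _ (sub_pos.2 hab).ne']

lemma ordinalSum_endpoints {I : Type*} {a b : I → ℝ} {N : I → ℝ → ℝ} {NI : ℝ → ℝ}
    (hfam : GoodFamily a b) (hNI : IsOrdinalSum a b N NI) (i : I) :
    NI (a i) = (1 - b i) + (b i - a i) * N i 0 ∧
      NI (b i) = (1 - b i) + (b i - a i) * N i 1 := by
  have h0 := (ordinalSum_affine hfam hNI i (t := 0) (by simp)).2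
  have h1 := (ordinalSum_affine hfam hNI i (t := 1) (by simp)).2
  simp only [mul_zero, add_zero, mul_one, add_sub_cancel] at h0 h1
  exact ⟨h0, h1⟩

lemma ordinalSum_strictAntiOn_Icc {I : Type*} {a b : I → ℝ} {N : I → ℝ → ℝ} {NI : ℝ → ℝ}
    (hfam : GoodFamily a b) (hNI : IsOrdinalSum a b N NI) (i : I)
    (hN : StrictAntiOn (N i) (Icc (0:ℝ) 1)) : StrictAntiOn NI (Icc (a i) (b i)) := by
  obtain ⟨h0, hab, h1⟩ := hfam.1 i
  have hpos : 0 < b i - a i := sub_pos.2 hab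
  have hcoord : ∀ x ∈ Icc (a i) (b i), (x - a i) / (b i - a i) ∈ Icc (0:ℝ) 1 := fun x hx =>
    ⟨div_nonneg (by linarith [hx.1]) hpos.le, (div_le_one hpos).2 (by linarith [hx.2])⟩
  intro x hx y hy hxy
  rw [(hNI x ⟨h0.trans hx.1, hx.2.trans h1⟩).1 i hx,
    (hNI y ⟨h0.trans hy.1, hy.2.trans h1⟩).1 i hy]
  have := hN (hcoord x hx) (hcoord y hy) (by gcongr)
  gcongr

/-- A point `x` of `[0,1]` either lies in no open interval and is sent to `1 - x`, or it
lies in some `]a i, b i[` and is sent into `]1 - b i, 1 - a i[`. -/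
lemma ordinalSum_dichotomy {I : Type*} {a b : I → ℝ} {N : I → ℝ → ℝ} {NI : ℝ → ℝ}
    (hfam : GoodFamily a b) (hNI : IsOrdinalSum a b N NI)
    (hN : ∀ i, StrictAntiOn (N i) (Icc (0:ℝ) 1))
    (hend : ∀ i, NI (a i) = 1 - a i ∧ NI (b i) = 1 - b i) {x : ℝ} (hx : x ∈ Icc (0:ℝ) 1) :
    ((∀ i, x ≤ a i ∨ b i ≤ x) ∧ NI x = 1 - x) ∨
      ∃ i, x ∈ Ioo (a i) (b i) ∧ NI x ∈ Ioo (1 - b i) (1 - a i) := by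
  by_cases h : ∃ i, x ∈ Ioo (a i) (b i)
  · obtain ⟨i, hi⟩ := h
    have hab := (hfam.1 i).2.1.le
    have hs := ordinalSum_strictAntiOn_Icc hfam hNI i (hN i)
    refine Or.inr ⟨i, hi, ?_, ?_⟩
    · rw [← (hend i).2]
      exact hs (Ioo_subset_Icc_self hi) (right_mem_Icc.2 hab) hi.2
    · rw [← (hend i).1]
      exact hs (left_mem_Icc.2 hab) (Ioo_subset_Icc_self hi) hi.1
  · have hout : ∀ i, x ≤ a i ∨ b i ≤ x := by
      intro i
      by_contra! hc
      exact h ⟨i, hc⟩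
    refine Or.inl ⟨hout, ?_⟩
    by_cases hc : ∃ i, x ∈ Icc (a i) (b i)
    · -- a free point of a closed interval is one of its endpoints
      obtain ⟨i, hi⟩ := hc
      rcases hout i with hxa | hxb
      · rw [le_antisymm hxa hi.1, (hend i).1]
      · rw [le_antisymm hi.2 hxb, (hend i).2]
    · exact (hNI x hx).2 (not_exists.1 hc)

lemma ordinalSum_strictAntiOn {I : Type*} {a b : I → ℝ} {N : I → ℝ → ℝ} {NI : ℝ → ℝ}
    (hfam : GoodFamily a b) (hNI : IsOrdinalSum a b N NI)
    (hN : ∀ i, StrictAntiOn (N i) (Icc (0:ℝ) 1))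
    (hend : ∀ i, NI (a i) = 1 - a i ∧ NI (b i) = 1 - b i) :
    StrictAntiOn NI (Icc (0:ℝ) 1) := by
  intro x hx y hy hxy
  rcases ordinalSum_dichotomy hfam hNI hN hend hx with ⟨hxo, hxe⟩ | ⟨i, hxi, hxm⟩ <;>
    rcases ordinalSum_dichotomy hfam hNI hN hend hy with ⟨hyo, hye⟩ | ⟨j, hyj, hym⟩
  · linarith
  · rcases hxo j with h | h <;> linarith [hyj.1, hyj.2, hym.1, hym.2]
  · rcases hyo i with h | h <;> linarith [hxi.1, hxi.2, hxm.1, hxm.2]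
  · rcases eq_or_ne i j with rfl | hij
    · exact ordinalSum_strictAntiOn_Icc hfam hNI i (hN i) (Ioo_subset_Icc_self hxi)
        (Ioo_subset_Icc_self hyj) hxy
    · have hle : b i ≤ a j := by
        by_contra! hlt
        -- otherwise any point just above `max x (a j)` lies in both intervals
        obtain ⟨z, hz1, hz2⟩ := exists_between
          (lt_min (max_lt hxi.2 hlt) (max_lt (hxy.trans hyj.2) (hfam.1 j).2.1))
        obtain ⟨hxz, hjz⟩ := max_lt_iff.1 hz1
        obtain ⟨hzi, hzj⟩ := lt_min_iff.1 hz2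
        exact disjoint_left.1 (hfam.2 i j hij) ⟨hxi.1.trans hxz, hzi⟩ ⟨hjz, hzj⟩
      linarith [hxm.1, hym.2]

theorem ordinalSum_strictAnti_fuzzyNegation_iff {I : Type*} (a b : I → ℝ)
    (N : I → ℝ → ℝ) (NI : ℝ → ℝ)
    (hfam : GoodFamily a b)
    (hmaps : ∀ i, ∀ x ∈ Icc (0:ℝ) 1, N i x ∈ Icc (0:ℝ) 1)
    (hNI : IsOrdinalSum a b N NI) :
    (∀ i, FuzzyNegation (N i) ∧ StrictAntiOn (N i) (Icc (0:ℝ) 1)) ↔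
      ((FuzzyNegation NI ∧ StrictAntiOn NI (Icc (0:ℝ) 1)) ∧
        ∀ i, NI (a i) = 1 - a i ∧ NI (b i) = 1 - b i) := by
  constructor
  · intro h
    have hend : ∀ i, NI (a i) = 1 - a i ∧ NI (b i) = 1 - b i := by
      intro i
      obtain ⟨ha, hb⟩ := ordinalSum_endpoints hfam hNI i
      obtain ⟨⟨-, h0, h1, -⟩, -⟩ := h i
      rw [ha, hb, h0, h1]
      constructor <;> ring
    have hs := ordinalSum_strictAntiOn hfam hNI (fun i => (h i).2) hend
    have m0 : (0:ℝ) ∈ Icc (0:ℝ) 1 := by simp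
    have m1 : (1:ℝ) ∈ Icc (0:ℝ) 1 := by simp
    -- `0` and `1` are free points, because every `]a i, b i[` is contained in `]0, 1[`
    have e0 : NI 0 = 1 := by
      rcases ordinalSum_dichotomy hfam hNI (fun i => (h i).2) hend m0 with ⟨-, he⟩ | ⟨i, hi, -⟩
      · linarith
      · linarith [hi.1, (hfam.1 i).1]
    have e1 : NI 1 = 0 := by
      rcases ordinalSum_dichotomy hfam hNI (fun i => (h i).2) hend m1 with ⟨-, he⟩ | ⟨i, hi, -⟩
      · linarith
      · linarith [hi.2, (hfam.1 i).2.2]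
    refine ⟨⟨⟨fun x hx => ⟨?_, ?_⟩, e0, e1, fun x hx y hy hxy => hs.antitoneOn hx hy hxy⟩, hs⟩,
      hend⟩
    · rw [← e1]
      exact hs.antitoneOn hx m1 hx.2
    · rw [← e0]
      exact hs.antitoneOn m0 hx hx.1
  · rintro ⟨⟨-, hs⟩, hend⟩ i
    have hpos : 0 < b i - a i := sub_pos.2 (hfam.1 i).2.1
    have hN : StrictAntiOn (N i) (Icc (0:ℝ) 1) := by
      intro s hs' t ht hst
      obtain ⟨ms, es⟩ := ordinalSum_affine hfam hNI i hs'
      obtain ⟨mt, et⟩ := ordinalSum_affine hfam hNI i ht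
      have hlt := hs ms mt (by gcongr)
      rw [es, et] at hlt
      exact lt_of_mul_lt_mul_left (lt_of_add_lt_add_left hlt) hpos.le
    obtain ⟨ha, hb⟩ := ordinalSum_endpoints hfam hNI i
    rw [(hend i).1] at ha
    rw [(hend i).2] at hb
    refine ⟨⟨hmaps i, ?_, ?_, fun x hx y hy hxy => hN.antitoneOn hx hy hxy⟩, hN⟩
    · exact mul_left_cancel₀ hpos.ne' (by linarith)
    · exact mul_left_cancel₀ hpos.ne' (by linarith)
end

section
/- Let (]a_i,b_i[)_{i∈I} be a family of nonempty, pairwise disjoint open subintervals of [0,1] and (N_i)_{i∈I} a family of fuzzy negations. If every N_i is a strict fuzzy negation and, for each i ∈ I, there exists j ∈ I such that a_j = 1−b_i, b_j = 1−a_i, and N_j is the inverse of N_i (i.e., N_j(N_i(x)) = x and N_i(N_j(x)) = x for all x ∈ [0,1]), then the ordinal sum N_I of the summands (a_i,b_i,N_i)_{i∈I} is a strong fuzzy negation. -/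
/-!
The ordinal sum maps each `[a i, b i]` into the reflected interval `[1 - b i, 1 - a i]`
(`ordinalSum_mem_reflected`) and is `x ↦ 1 - x` off these intervals. If `x ≤ y` do not lie in a
common interval, then some `c ∈ [x, y]`, namely an endpoint of an interval or `x` or `y` itself,
satisfies `NI y ≤ 1 - c ≤ NI x` (`GoodFamily.le_of_lt`); this gives monotonicity.
For involutivity, the reflected interval is itself a summand whose negation is the inverse of
`N i`, so the rescalings cancel; and since the family is closed under reflection, a point outside
every interval has its reflection outside every interval too.
-/

open Set

lemma rescale_mem_unit {a b x : ℝ} (hab : a < b) (hx : x ∈ Icc a b) :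
    (x - a) / (b - a) ∈ Icc (0:ℝ) 1 :=
  ⟨div_nonneg (by linarith [hx.1]) (by linarith),
    (div_le_one (by linarith)).2 (by linarith [hx.2])⟩

lemma ordinalSum_mem_reflected {I : Type*} {a b : I → ℝ} {N : I → ℝ → ℝ} {NI : ℝ → ℝ}
    (hfam : GoodFamily a b) (hneg : ∀ i, FuzzyNegation (N i)) (hNI : IsOrdinalSum a b N NI)
    {x : ℝ} {i : I} (hx : x ∈ Icc (a i) (b i)) :
    NI x ∈ Icc (1 - b i) (1 - a i) := by
  obtain ⟨h0, hab, h1⟩ := hfam.1 i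
  have ht := (hneg i).1 _ (rescale_mem_unit hab hx)
  rw [(hNI x ⟨h0.trans hx.1, hx.2.trans h1⟩).1 i hx]
  constructor <;> nlinarith [ht.1, ht.2]

/-- If `]a i, b i[` ends strictly before some point of `[a j, b j]`, disjointness puts it entirely
to the left of `]a j, b j[`. -/
lemma GoodFamily.le_of_lt {I : Type*} {a b : I → ℝ} (hfam : GoodFamily a b)
    {i j : I} {y : ℝ} (hy : y ∈ Icc (a j) (b j)) (hiy : b i < y) : b i ≤ a j := by
  rcases ne_or_eq i j with hij | rfl
  · have hi := (hfam.1 i).2.1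
    have h := Set.Ioo_disjoint_Ioo.1 (hfam.2 i j hij)
    rw [min_eq_left (hiy.le.trans hy.2)] at h
    rcases le_max_iff.1 h with h | h
    · linarith
    · exact h
  · exact absurd hy.2 (not_le.2 hiy)

theorem ordinalSum_strong_of_strict_inverses {I : Type*} (a b : I → ℝ)
    (N : I → ℝ → ℝ) (NI : ℝ → ℝ)
    (hfam : GoodFamily a b) (hneg : ∀ i, FuzzyNegation (N i))
    (hNI : IsOrdinalSum a b N NI)
    (hstrict : ∀ i, ContinuousOn (N i) (Icc (0:ℝ) 1) ∧ StrictAntiOn (N i) (Icc (0:ℝ) 1))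
    (hinv : ∀ i, ∃ j, a j = 1 - b i ∧ b j = 1 - a i ∧
      ∀ x ∈ Icc (0:ℝ) 1, N j (N i x) = x ∧ N i (N j x) = x) :
    FuzzyNegation NI ∧ ∀ x ∈ Icc (0:ℝ) 1, NI (NI x) = x := by
  have hmem := @ordinalSum_mem_reflected I a b N NI hfam hneg hNI
  refine ⟨⟨?_, ?_, ?_, ?_⟩, ?_⟩
  · intro x hx
    by_cases h : ∃ i, x ∈ Icc (a i) (b i)
    · obtain ⟨i, hi⟩ := h
      obtain ⟨h0, hab, h1⟩ := hfam.1 i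
      have := hmem hi
      exact ⟨by linarith [this.1], by linarith [this.2]⟩
    · rw [(hNI x hx).2 (not_exists.1 h)]
      exact ⟨by linarith [hx.2], by linarith [hx.1]⟩
  · have h01 : (0:ℝ) ∈ Icc (0:ℝ) 1 := by simp
    by_cases h : ∃ i, (0:ℝ) ∈ Icc (a i) (b i)
    · obtain ⟨i, hi⟩ := h
      have ha : a i = 0 := le_antisymm hi.1 (hfam.1 i).1
      rw [(hNI 0 h01).1 i hi, ha, sub_self, zero_div, (hneg i).2.1]
      ring
    · rw [(hNI 0 h01).2 (not_exists.1 h)]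
      ring
  · have h01 : (1:ℝ) ∈ Icc (0:ℝ) 1 := by simp
    by_cases h : ∃ i, (1:ℝ) ∈ Icc (a i) (b i)
    · obtain ⟨i, hi⟩ := h
      obtain ⟨-, hab, h1⟩ := hfam.1 i
      have hb : b i = 1 := le_antisymm h1 hi.2
      have hne : (1 - a i) ≠ 0 := by linarith
      rw [(hNI 1 h01).1 i hi, hb, div_self hne, (hneg i).2.2.1]
      ring
    · rw [(hNI 1 h01).2 (not_exists.1 h)]
      ring
  · intro x hx y hy hxy
    by_cases h : ∃ i, x ∈ Icc (a i) (b i)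
    · obtain ⟨i, hi⟩ := h
      obtain ⟨h0, hab, h1⟩ := hfam.1 i
      by_cases hyi : y ≤ b i
      · have hyi' : y ∈ Icc (a i) (b i) := ⟨hi.1.trans hxy, hyi⟩
        have hd : 0 < b i - a i := by linarith
        have hN := (hneg i).2.2.2 _ (rescale_mem_unit hab hi) _ (rescale_mem_unit hab hyi')
          (by gcongr)
        rw [(hNI x hx).1 i hi, (hNI y hy).1 i hyi']
        gcongr
      · have hxi := (hmem hi).1
        by_cases h' : ∃ j, y ∈ Icc (a j) (b j)
        · obtain ⟨j, hj⟩ := h'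
          linarith [(hmem hj).2, hfam.le_of_lt hj (not_le.1 hyi)]
        · rw [(hNI y hy).2 (not_exists.1 h')]
          linarith
    · have hx' := not_exists.1 h
      rw [(hNI x hx).2 hx']
      by_cases h' : ∃ j, y ∈ Icc (a j) (b j)
      · obtain ⟨j, hj⟩ := h'
        have hlt : x < a j := by
          by_contra hc
          exact hx' j ⟨not_lt.1 hc, hxy.trans hj.2⟩
        linarith [(hmem hj).2]
      · rw [(hNI y hy).2 (not_exists.1 h')]
        linarith
  · intro x hx
    by_cases h : ∃ i, x ∈ Icc (a i) (b i)
    · obtain ⟨i, hi⟩ := h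
      obtain ⟨h0, hab, h1⟩ := hfam.1 i
      obtain ⟨j, haj, hbj, hN⟩ := hinv i
      have hm := hmem hi
      have hmj : NI x ∈ Icc (a j) (b j) := by rwa [haj, hbj]
      have hd : b i - a i ≠ 0 := by linarith
      have hNx : (NI x - a j) / (b j - a j) = N i ((x - a i) / (b i - a i)) := by
        have hw : b j - a j = b i - a i := by linarith
        rw [hw, div_eq_iff hd, (hNI x hx).1 i hi, haj]
        ring
      rw [(hNI (NI x) ⟨by linarith [hm.1], by linarith [hm.2]⟩).1 j hmj, hNx,
        (hN _ (rescale_mem_unit hab hi)).1, haj, hbj]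
      field_simp
      ring
    · have hx' := not_exists.1 h
      rw [(hNI x hx).2 hx', (hNI (1 - x) ⟨by linarith [hx.2], by linarith [hx.1]⟩).2]
      · ring
      · intro k hk
        obtain ⟨j, haj, hbj, -⟩ := hinv k
        exact hx' j ⟨by linarith [hk.2], by linarith [hk.1]⟩
end
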